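/- arXiv:1609.07454 — 2 statements merged into one kernel-verified Lean document; each statement's English description precedes it below -/
import Mathlib

section
/- Let H₀, H₁, H₂ be complex Hilbert spaces and let S : H₀ →ₗ.[ℂ] H₁ and T : H₁ →ₗ.[ℂ] H₂ be densely defined closed unbounded operators such that range S ⊆ ker T. If ker S† = range T† (i.e., the homology of the dual complex at H₁ vanishes), then ker T = closure(range S). In particular, if in addition range S is closed, then ker T = range S. -/
/-!
The orthogonality relations `ker S† = (range S)ᗮ` and `ker T ⊆ (range T†)ᗮ` turn the inclusion
`ker S† ⊆ range T†` into
`ker T ⊆ (range T†)ᗮ ⊆ (ker S†)ᗮ = (range S)ᗮᗮ = closure (range S)`.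
Conversely, `ker T` contains `range S` and is closed, being the preimage of the closed graph of `T`
under `u ↦ (u, 0)`.
-/

section Kernel

variable {R E F : Type*} [Ring R] [AddCommGroup E] [Module R E] [AddCommGroup F] [Module R F]

/-- The kernel of a partially defined linear map `T : E →ₗ.[R] F`, as a submodule of `E` (whereas
`LinearMap.ker T.toFun` is a submodule of `T.domain`). It is defined through the graph, so that
closedness of `T` passes directly to the kernel. -/
def pmapKer (T : E →ₗ.[R] F) : Submodule R E :=
  T.graph.comap (LinearMap.inl R E F)

theorem mem_pmapKer_iff_mem_graph {T : E →ₗ.[R] F} {u : E} :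
    u ∈ pmapKer T ↔ (u, (0 : F)) ∈ T.graph :=
  Iff.rfl

theorem coe_pmapKer (T : E →ₗ.[R] F) :
    (pmapKer T : Set E) = {u | ∃ hu : u ∈ T.domain, T ⟨u, hu⟩ = 0} := by
  ext u
  simp [mem_pmapKer_iff_mem_graph, LinearPMap.mem_graph_iff]

theorem coe_range_toFun (T : E →ₗ.[R] F) :
    (LinearMap.range T.toFun : Set F) = Set.range fun x : T.domain => T x :=
  LinearMap.coe_range T.toFun

end Kernel

theorem isClosed_pmapKer {R E F : Type*} [CommRing R]
    [AddCommGroup E] [Module R E] [TopologicalSpace E]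
    [AddCommGroup F] [Module R F] [TopologicalSpace F]
    {T : E →ₗ.[R] F} (hT : T.IsClosed) : IsClosed (pmapKer T : Set E) :=
  hT.preimage (Continuous.prodMk_left (0 : F))

section Adjoint

open scoped LinearPMap

variable {𝕜 E F G : Type*} [RCLike 𝕜]
  [NormedAddCommGroup E] [InnerProductSpace 𝕜 E]
  [NormedAddCommGroup F] [InnerProductSpace 𝕜 F]
  [NormedAddCommGroup G] [InnerProductSpace 𝕜 G]

theorem mem_orthogonal_range_toFun_iff {T : E →ₗ.[𝕜] F} {v : F} :
    v ∈ (LinearMap.range T.toFun)ᗮ ↔ ∀ x : T.domain, inner 𝕜 (T x) v = 0 :=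
  Set.forall_mem_range

theorem pmapKer_le_orthogonal_range_of_isFormalAdjoint {A : F →ₗ.[𝕜] E} {T : E →ₗ.[𝕜] F}
    (h : A.IsFormalAdjoint T) : pmapKer T ≤ (LinearMap.range A.toFun)ᗮ := by
  intro u hu
  obtain ⟨x, rfl, hTx⟩ := (LinearPMap.mem_graph_iff T).1 (mem_pmapKer_iff_mem_graph.1 hu)
  refine mem_orthogonal_range_toFun_iff.2 fun g => ?_
  calc inner 𝕜 (A g) (x : E) = inner 𝕜 (g : F) (T x) := h g x
    _ = 0 := by rw [hTx, inner_zero_right]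

theorem pmapKer_adjoint [CompleteSpace E] {S : E →ₗ.[𝕜] F} (hS : Dense (S.domain : Set E)) :
    pmapKer S† = (LinearMap.range S.toFun)ᗮ := by
  ext v
  rw [mem_pmapKer_iff_mem_graph, LinearPMap.adjoint_graph_eq_graph_adjoint hS,
    mem_orthogonal_range_toFun_iff]
  simp [LinearPMap.mem_graph_iff]

theorem pmapKer_eq_topologicalClosure_range [CompleteSpace E] [CompleteSpace F]
    {S : E →ₗ.[𝕜] F} {T : F →ₗ.[𝕜] G}
    (hSdense : Dense (S.domain : Set E)) (hTdense : Dense (T.domain : Set F))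
    (hTclosed : T.IsClosed) (hST : LinearMap.range S.toFun ≤ pmapKer T)
    (hdual : pmapKer S† ≤ LinearMap.range T†.toFun) :
    pmapKer T = (LinearMap.range S.toFun).topologicalClosure := by
  refine le_antisymm ?_ (Submodule.topologicalClosure_minimal _ hST (isClosed_pmapKer hTclosed))
  calc pmapKer T ≤ (LinearMap.range T†.toFun)ᗮ :=
        pmapKer_le_orthogonal_range_of_isFormalAdjoint (LinearPMap.adjoint_isFormalAdjoint hTdense)
    _ ≤ (pmapKer S†)ᗮ := Submodule.orthogonal_le hdual
    _ = (LinearMap.range S.toFun)ᗮᗮ := by rw [pmapKer_adjoint hSdense]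
    _ = (LinearMap.range S.toFun).topologicalClosure :=
        Submodule.orthogonal_orthogonal_eq_closure _

end Adjoint

theorem stmt_3_general {𝕜 H₀ H₁ H₂ : Type*} [RCLike 𝕜]
    [NormedAddCommGroup H₀] [InnerProductSpace 𝕜 H₀] [CompleteSpace H₀]
    [NormedAddCommGroup H₁] [InnerProductSpace 𝕜 H₁] [CompleteSpace H₁]
    [NormedAddCommGroup H₂] [InnerProductSpace 𝕜 H₂]
    (S : H₀ →ₗ.[𝕜] H₁) (T : H₁ →ₗ.[𝕜] H₂)
    (hSdense : Dense (S.domain : Set H₀)) (hTdense : Dense (T.domain : Set H₁))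
    (hTclosed : T.IsClosed)
    (hST : (Set.range fun x : S.domain => S x) ⊆
      {u : H₁ | ∃ hu : u ∈ T.domain, T ⟨u, hu⟩ = 0})
    (hdual : {u : H₁ | ∃ hu : u ∈ S.adjoint.domain, S.adjoint ⟨u, hu⟩ = 0} ⊆
      Set.range fun g : T.adjoint.domain => T.adjoint g) :
    ({u : H₁ | ∃ hu : u ∈ T.domain, T ⟨u, hu⟩ = 0} =
        closure (Set.range fun x : S.domain => S x)) ∧
      (IsClosed (Set.range fun x : S.domain => S x) →
        {u : H₁ | ∃ hu : u ∈ T.domain, T ⟨u, hu⟩ = 0} =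
          Set.range fun x : S.domain => S x) := by
  simp only [← coe_pmapKer, ← coe_range_toFun, SetLike.coe_subset_coe] at hST hdual ⊢
  have hker : (pmapKer T : Set H₁) = closure (LinearMap.range S.toFun) :=
    congrArg SetLike.coe
      (pmapKer_eq_topologicalClosure_range hSdense hTdense hTclosed hST hdual)
  exact ⟨hker, fun hclosed => hker.trans hclosed.closure_eq⟩

/-- Theorem 2.2, first part (Hilbert-space instance of Serre duality): for densely defined
closed operators `S : H₀ →ₗ.[ℂ] H₁` and `T : H₁ →ₗ.[ℂ] H₂` with `range S ⊆ ker T`, if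
`ker S† = range T†` (vanishing of the dual homology at `H₁`), then `ker T = closure (range S)`;
in particular, if moreover `range S` is closed, then `ker T = range S`. -/
theorem stmt_3 {H₀ H₁ H₂ : Type*}
    [NormedAddCommGroup H₀] [InnerProductSpace ℂ H₀] [CompleteSpace H₀]
    [NormedAddCommGroup H₁] [InnerProductSpace ℂ H₁] [CompleteSpace H₁]
    [NormedAddCommGroup H₂] [InnerProductSpace ℂ H₂] [CompleteSpace H₂]
    (S : H₀ →ₗ.[ℂ] H₁) (T : H₁ →ₗ.[ℂ] H₂)
    (hSdense : Dense (S.domain : Set H₀)) (hTdense : Dense (T.domain : Set H₁))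
    (hSclosed : S.IsClosed) (hTclosed : T.IsClosed)
    (hST : (Set.range fun x : S.domain => S x) ⊆
      {u : H₁ | ∃ hu : u ∈ T.domain, T ⟨u, hu⟩ = 0})
    (hdual : {u : H₁ | ∃ hu : u ∈ S.adjoint.domain, S.adjoint ⟨u, hu⟩ = 0} =
      Set.range fun g : T.adjoint.domain => T.adjoint g) :
    ({u : H₁ | ∃ hu : u ∈ T.domain, T ⟨u, hu⟩ = 0} =
        closure (Set.range fun x : S.domain => S x)) ∧
      (IsClosed (Set.range fun x : S.domain => S x) →
        {u : H₁ | ∃ hu : u ∈ T.domain, T ⟨u, hu⟩ = 0} =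
          Set.range fun x : S.domain => S x) :=
  stmt_3_general S T hSdense hTdense hTclosed hST hdual.subset
end

section
/- Let H₁ and H₂ be complex Hilbert spaces and T : H₁ →ₗ.[ℂ] H₂ a densely defined closed unbounded operator. Then the range of T is closed in H₂ if and only if the range of the adjoint T† is closed in H₁. -/
/-!
A bounded surjection `A` between Hilbert spaces has an adjoint that is bounded below, by the open
mapping theorem; restricting the codomain, a bounded operator with closed range has an adjoint with
closed range. The graph `G` of a closed operator is itself a Hilbert space, with bounded coordinate
projections `P : G → E` and `A : G → F`, and `(y, z)` lies on the graph of the adjoint if and only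
if `A† y = P† z`. The range of the adjoint is therefore the preimage under `P†` of the range of
`A†`, and is closed as soon as the range of `A` is. The converse follows by applying this to the
adjoint: the graph of the adjoint is the rotated orthogonal complement of `G`, so a closed graph is
its own double adjoint.
-/

section HilbertSpaces

open ContinuousLinearMap

open scoped InnerProductSpace InnerProduct NNReal

variable {𝕜 E F K : Type*} [RCLike 𝕜]
  [NormedAddCommGroup E] [InnerProductSpace 𝕜 E]
  [NormedAddCommGroup F] [InnerProductSpace 𝕜 F]
  [NormedAddCommGroup K] [InnerProductSpace 𝕜 K]

section BoundedOperator

variable [CompleteSpace E] [CompleteSpace F]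

theorem exists_antilipschitzWith_adjoint_of_surjective (A : E →L[𝕜] F)
    (hA : Function.Surjective A) : ∃ c : ℝ≥0, AntilipschitzWith c (A†) := by
  obtain ⟨C, hC, exists_preimage⟩ := A.exists_preimage_norm_le hA
  refine ⟨⟨C, hC.le⟩, (A†).antilipschitz_of_bound fun y ↦ ?_⟩
  rcases eq_or_ne y 0 with rfl | hy
  · simp
  obtain ⟨x, hx, norm_x_le⟩ := exists_preimage y
  refine le_of_mul_le_mul_left ?_ (norm_pos_iff.2 hy)
  calc ‖y‖ * ‖y‖ = RCLike.re ⟪A x, y⟫_𝕜 := by rw [hx, inner_self_eq_norm_mul_norm]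
    _ = RCLike.re ⟪x, (A†) y⟫_𝕜 := by rw [adjoint_inner_right]
    _ ≤ ‖x‖ * ‖(A†) y‖ := re_inner_le_norm _ _
    _ ≤ C * ‖y‖ * ‖(A†) y‖ := by gcongr
    _ = ‖y‖ * (C * ‖(A†) y‖) := by ring

theorem isClosed_range_adjoint (A : E →L[𝕜] F) (hA : IsClosed (A.range : Set F)) :
    IsClosed ((A†).range : Set E) := by
  have : CompleteSpace A.range := hA.completeSpace_coe
  obtain ⟨c, hc⟩ := exists_antilipschitzWith_adjoint_of_surjective A.rangeRestrict
    A.toLinearMap.surjective_rangeRestrict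
  have adjoint_eq : A† = (A.rangeRestrict†) ∘L A.range.orthogonalProjectionOnto := by
    rw [← Submodule.adjoint_subtypeL, ← adjoint_comp]
    rfl
  have projection_surjective : Function.Surjective A.range.orthogonalProjectionOnto := fun y ↦
    ⟨y, Submodule.orthogonalProjectionOnto_mem_subspace_eq_self y⟩
  have range_eq : (A†).range = (A.rangeRestrict†).range := by
    rw [adjoint_eq]
    exact LinearMap.range_comp_of_range_eq_top _
      (LinearMap.range_eq_top.2 projection_surjective)
  rw [range_eq]
  exact hc.isClosed_range (A.rangeRestrict†).uniformContinuous

end BoundedOperator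

section LinearRelation

/-- The linear relation `G ≤ E × F` as a subspace of the Hilbert sum `WithLp 2 (E × F)`, where it
has an orthogonal complement; the norm of `E × F` itself is not induced by an inner product. -/
def l2Submodule (G : Submodule 𝕜 (E × F)) : Submodule 𝕜 (WithLp 2 (E × F)) :=
  G.comap (WithLp.linearEquiv 2 𝕜 (E × F)).toLinearMap

theorem mem_adjoint_iff_mem_orthogonal_l2Submodule (G : Submodule 𝕜 (E × F)) (p : F × E) :
    p ∈ G.adjoint ↔ WithLp.toLp 2 (p.2, -p.1) ∈ (l2Submodule G)ᗮ := by
  rw [Submodule.mem_adjoint_iff, Submodule.mem_orthogonal]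
  simp only [WithLp.prod_inner_apply, inner_neg_right, ← sub_eq_add_neg, sub_eq_zero,
    eq_comm (a := inner 𝕜 _ p.1)]
  exact ⟨fun h u hu ↦ h _ _ hu, fun h a b hab ↦ h (WithLp.toLp 2 (a, b)) hab⟩

theorem isClosed_adjoint (G : Submodule 𝕜 (E × F)) : IsClosed (G.adjoint : Set (F × E)) := by
  have rotate_continuous : Continuous fun p : F × E ↦ WithLp.toLp 2 (p.2, -p.1) :=
    (WithLp.prod_continuous_toLp 2 E F).comp (by fun_prop)
  convert (l2Submodule G).isClosed_orthogonal.preimage rotate_continuous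
  ext p
  exact mem_adjoint_iff_mem_orthogonal_l2Submodule G p

theorem mem_adjoint_adjoint_iff_mem_orthogonal_orthogonal (G : Submodule 𝕜 (E × F)) (p : E × F) :
    p ∈ G.adjoint.adjoint ↔ WithLp.toLp 2 p ∈ (l2Submodule G)ᗮᗮ := by
  rw [Submodule.mem_adjoint_iff, Submodule.mem_orthogonal]
  constructor
  · intro h u hu
    have hu' : (-u.snd, u.fst) ∈ G.adjoint :=
      (mem_adjoint_iff_mem_orthogonal_l2Submodule G _).2 (by simpa only [neg_neg] using! hu)
    simpa [WithLp.prod_inner_apply] using h _ _ hu'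
  · intro h y z hyz
    have hyz' := (mem_adjoint_iff_mem_orthogonal_l2Submodule G _).1 hyz
    simpa [WithLp.prod_inner_apply, ← sub_eq_add_neg] using h _ hyz'

variable [CompleteSpace E] [CompleteSpace F]

theorem adjoint_adjoint_eq_topologicalClosure (G : Submodule 𝕜 (E × F)) :
    G.adjoint.adjoint = G.topologicalClosure := by
  ext p
  rw [mem_adjoint_adjoint_iff_mem_orthogonal_orthogonal,
    Submodule.orthogonal_orthogonal_eq_closure]
  have closure_eq := (WithLp.homeomorphProd 2 E F).preimage_closure (G : Set (E × F))
  exact (Set.ext_iff.1 closure_eq (WithLp.toLp 2 p)).symm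

theorem mem_adjoint_range_prod_iff [CompleteSpace K] (P : K →L[𝕜] E) (A : K →L[𝕜] F)
    (p : F × E) :
    p ∈ (P.prod A).range.adjoint ↔ (A†) p.1 = (P†) p.2 := by
  simp only [Submodule.mem_adjoint_iff, sub_eq_zero]
  constructor
  · intro h
    refine ext_inner_left 𝕜 fun k ↦ ?_
    rw [adjoint_inner_right, adjoint_inner_right]
    exact h _ _ ⟨k, rfl⟩
  · rintro h a b ⟨k, hk⟩
    obtain ⟨rfl, rfl⟩ := Prod.mk.inj hk
    calc ⟪A k, p.1⟫_𝕜 = ⟪k, (P†) p.2⟫_𝕜 := by rw [← h, adjoint_inner_right]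
      _ = ⟪P k, p.2⟫_𝕜 := adjoint_inner_right P k p.2

theorem map_snd_adjoint_range_prod [CompleteSpace K] (P : K →L[𝕜] E) (A : K →L[𝕜] F) :
    (P.prod A).range.adjoint.map (LinearMap.snd 𝕜 F E) =
      (A†).range.comap (P† : E →ₗ[𝕜] K) := by
  ext z
  constructor
  · rintro ⟨p, hp, rfl⟩
    exact ⟨p.1, (mem_adjoint_range_prod_iff P A p).1 hp⟩
  · rintro ⟨y, hy⟩
    exact ⟨(y, z), (mem_adjoint_range_prod_iff P A (y, z)).2 hy, rfl⟩

variable {G : Submodule 𝕜 (E × F)}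

theorem isClosed_map_snd_adjoint (hG : IsClosed (G : Set (E × F)))
    (h : IsClosed (G.map (LinearMap.snd 𝕜 E F) : Set F)) :
    IsClosed (G.adjoint.map (LinearMap.snd 𝕜 F E) : Set E) := by
  have : CompleteSpace (l2Submodule G) :=
    (hG.preimage (WithLp.prod_continuous_ofLp 2 E F)).completeSpace_coe
  let P : l2Submodule G →L[𝕜] E := WithLp.fstL 2 𝕜 E F ∘L (l2Submodule G).subtypeL
  let A : l2Submodule G →L[𝕜] F := WithLp.sndL 2 𝕜 E F ∘L (l2Submodule G).subtypeL
  have range_prod : (P.prod A).range = G := by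
    ext p
    exact ⟨fun ⟨g, hg⟩ ↦ hg ▸ g.2, fun hp ↦ ⟨⟨WithLp.toLp 2 p, hp⟩, rfl⟩⟩
  have range_A : A.range = G.map (LinearMap.snd 𝕜 E F) := by
    ext y
    exact ⟨fun ⟨g, hg⟩ ↦ ⟨g.1.ofLp, g.2, hg⟩, fun ⟨p, hp, hy⟩ ↦ ⟨⟨WithLp.toLp 2 p, hp⟩, hy⟩⟩
  rw [← range_A] at h
  rw [← range_prod, map_snd_adjoint_range_prod]
  exact (isClosed_range_adjoint A h).preimage (P†).continuous

theorem isClosed_map_snd_iff_adjoint (hG : IsClosed (G : Set (E × F))) :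
    IsClosed (G.map (LinearMap.snd 𝕜 E F) : Set F) ↔
      IsClosed (G.adjoint.map (LinearMap.snd 𝕜 F E) : Set E) := by
  refine ⟨isClosed_map_snd_adjoint hG, fun h ↦ ?_⟩
  have adjoint_adjoint_eq : G.adjoint.adjoint = G := by
    rw [adjoint_adjoint_eq_topologicalClosure, hG.submodule_topologicalClosure_eq]
  simpa only [adjoint_adjoint_eq] using isClosed_map_snd_adjoint (isClosed_adjoint G) h

end LinearRelation

theorem stmt_4_general [CompleteSpace E] [CompleteSpace F] (T : E →ₗ.[𝕜] F)
    (hTdense : Dense (T.domain : Set E)) (hTclosed : T.IsClosed) :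
    IsClosed (Set.range T) ↔ IsClosed (Set.range T.adjoint) := by
  have graph_iff := isClosed_map_snd_iff_adjoint hTclosed
  rwa [← LinearPMap.adjoint_graph_eq_graph_adjoint hTdense, LinearPMap.graph_map_snd_eq_range,
    LinearPMap.graph_map_snd_eq_range] at graph_iff

end HilbertSpaces

/-- Closed range theorem for densely defined closed unbounded operators between complex
Hilbert spaces: `range T` is closed if and only if `range T†` is closed. This is the operative
content in the `L²` setting of the second part of Theorem 2.2 (Serre duality). -/
theorem stmt_4 {H₁ H₂ : Type*}
    [NormedAddCommGroup H₁] [InnerProductSpace ℂ H₁] [CompleteSpace H₁]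
    [NormedAddCommGroup H₂] [InnerProductSpace ℂ H₂] [CompleteSpace H₂]
    (T : H₁ →ₗ.[ℂ] H₂) (hTdense : Dense (T.domain : Set H₁)) (hTclosed : T.IsClosed) :
    IsClosed (Set.range fun x : T.domain => T x) ↔
      IsClosed (Set.range fun y : T.adjoint.domain => T.adjoint y) :=
  stmt_4_general T hTdense hTclosed
end
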